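/- arXiv:2401.06738 — 4 statements merged into one kernel-verified Lean document; each statement's English description precedes it below -/
import Mathlib

section
/- (Lemma: lower bound on the averaging coefficient product.) Let L ≥ μ > 0, T ≥ 1, γ = (1/T)^{1/T}, η_k = γ^{k+1}/(2L) for k ≥ 0, and λ_T = ((1 − 2η_0 L)/(η_T μ))·(1 − (1 − η_T μ)^T). Then λ_T · η_T ≥ ((1 − γ)/μ) · (1 − exp(−μγ/(2L))). -/
noncomputable section

/-- The decay factor `γ = (1/T)^{1/T}` of the exponentially decreasing step sizes with horizon `T`,
chosen so that `T γ^T = 1`. -/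
def decayFactor (T : ℕ) : ℝ := (T : ℝ)⁻¹ ^ (T : ℝ)⁻¹

/-- The exponentially decreasing step size `η_k` with decay factor `γ` for an `L`-smooth objective.
The exponent is `k + 1`, so the initial step is already `γ/(2L)`. -/
def expStepSize (L γ : ℝ) (k : ℕ) : ℝ := γ ^ (k + 1) / (2 * L)

lemma decayFactor_pos {T : ℕ} (hT : T ≠ 0) : 0 < decayFactor T :=
  Real.rpow_pos_of_pos (by positivity) _

lemma decayFactor_le_one (T : ℕ) : decayFactor T ≤ 1 :=
  Real.rpow_le_one (by positivity) (Nat.cast_inv_le_one T) (by positivity)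

lemma natCast_mul_decayFactor_pow {T : ℕ} (hT : T ≠ 0) : (T : ℝ) * decayFactor T ^ T = 1 := by
  rw [decayFactor, Real.rpow_inv_natCast_pow (by positivity) hT]
  exact mul_inv_cancel₀ (Nat.cast_ne_zero.mpr hT)

lemma two_mul_expStepSize_zero_mul {L : ℝ} (hL : L ≠ 0) (γ : ℝ) :
    2 * expStepSize L γ 0 * L = γ := by
  rw [expStepSize, zero_add, pow_one]
  field_simp

lemma natCast_mul_expStepSize_decayFactor (L : ℝ) {T : ℕ} (hT : T ≠ 0) :
    T * expStepSize L (decayFactor T) T = decayFactor T / (2 * L) := by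
  rw [expStepSize, ← mul_div_assoc, pow_succ, ← mul_assoc, natCast_mul_decayFactor_pow hT, one_mul]

lemma expStepSize_pos {L γ : ℝ} (hL : 0 < L) (hγ : 0 < γ) (k : ℕ) : 0 < expStepSize L γ k := by
  rw [expStepSize]
  positivity

lemma expStepSize_mul_le_one {L μ γ : ℝ} (hL : 0 < L) (hμL : μ ≤ 2 * L) (hγ₀ : 0 ≤ γ)
    (hγ₁ : γ ≤ 1) (k : ℕ) : expStepSize L γ k * μ ≤ 1 := by
  rw [expStepSize, div_mul_eq_mul_div, div_le_one (by positivity)]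
  calc γ ^ (k + 1) * μ ≤ γ ^ (k + 1) * (2 * L) := by gcongr
    _ ≤ 2 * L := mul_le_of_le_one_left (by positivity) (pow_le_one₀ hγ₀ hγ₁)

lemma one_sub_pow_le_exp_neg_natCast_mul {x : ℝ} (hx : x ≤ 1) (n : ℕ) :
    (1 - x) ^ n ≤ Real.exp (-(n * x)) := by
  calc (1 - x) ^ n ≤ Real.exp (-x) ^ n :=
        pow_le_pow_left₀ (sub_nonneg.mpr hx) (Real.one_sub_le_exp_neg x) n
    _ = Real.exp (-(n * x)) := by rw [← Real.exp_nat_mul, mul_neg]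

theorem lambda_eta_product_lower_bound_general
    {L μ : ℝ} (hμ : 0 < μ) {T : ℕ} {η : ℕ → ℝ}
    (hη₀ : 2 * η 0 * L ≤ 1) (hηT : η T ≠ 0) (hηTμ : η T * μ ≤ 1) {lamT : ℝ}
    (hlamT : lamT = (1 - 2 * η 0 * L) / (η T * μ) * (1 - (1 - η T * μ) ^ T)) :
    (1 - 2 * η 0 * L) / μ * (1 - Real.exp (-(μ * (T * η T)))) ≤ lamT * η T := by
  have hexp : (1 - η T * μ) ^ T ≤ Real.exp (-(μ * (T * η T))) := by
    convert one_sub_pow_le_exp_neg_natCast_mul hηTμ T using 3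
    ring
  calc (1 - 2 * η 0 * L) / μ * (1 - Real.exp (-(μ * (T * η T))))
      ≤ (1 - 2 * η 0 * L) / μ * (1 - (1 - η T * μ) ^ T) :=
        mul_le_mul_of_nonneg_left (sub_le_sub_left hexp 1)
          (div_nonneg (sub_nonneg.mpr hη₀) hμ.le)
    _ = lamT * η T := by
        rw [hlamT]
        field_simp

/-- **Lemma**: lower bound on the product `λ_T · η_T` of the averaging coefficients of
SHB with exponentially decreasing step sizes `η_k = γ^{k+1}/(2L)`, `γ = (1/T)^{1/T}`. -/
theorem lambda_eta_product_lower_bound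
    (L μ : ℝ) (hμ : 0 < μ) (hμL : μ ≤ L)
    (T : ℕ) (hT : 1 ≤ T)
    (γ : ℝ) (hγ : γ = ((T : ℝ)⁻¹) ^ ((T : ℝ)⁻¹))
    (η : ℕ → ℝ) (hη : ∀ k, η k = γ ^ (k + 1) / (2 * L))
    (lamT : ℝ)
    (hlamT : lamT = (1 - 2 * η 0 * L) / (η T * μ) * (1 - (1 - η T * μ) ^ T)) :
    (1 - γ) / μ * (1 - Real.exp (-(μ * γ) / (2 * L))) ≤ lamT * η T := by
  have hL : 0 < L := hμ.trans_le hμL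
  have hT₀ : T ≠ 0 := Nat.one_le_iff_ne_zero.mp hT
  obtain rfl : γ = decayFactor T := hγ
  obtain rfl : η = expStepSize L (decayFactor T) := funext hη
  have hγ₀ := decayFactor_pos hT₀
  have hγ₁ := decayFactor_le_one T
  have hη₀ := two_mul_expStepSize_zero_mul hL.ne' (decayFactor T)
  have bound := lambda_eta_product_lower_bound_general hμ (hη₀.trans_le hγ₁)
    (expStepSize_pos hL hγ₀ T).ne' (expStepSize_mul_le_one hL (by linarith) hγ₀.le hγ₁ T) hlamT
  rwa [hη₀, natCast_mul_expStepSize_decayFactor L hT₀, ← mul_div_assoc, ← neg_div] at bound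
end
end

section
/- (Lemma: bound on the heavy-ball contraction constant.) Let κ ≥ 1, 0 < a ≤ 1, and set β = (1 − √a/(2√κ))². Define h(β, z) := −(β − (1 − √z)²)(β − (1 + √z)²). Then √2 (β + 1)/sqrt( min{ h(β, a/κ), h(β, a) } ) ≤ 3 sqrt(κ/a). -/
noncomputable section

/-!
With `w = a / κ` and `u = √w / 2`, we have `β = (1 - u)²` and `h(β, s²)` factors as
`(s² - u²) ((2 - u)² - s²)`. If `w ≤ s² ≤ 1`, the first factor is at least `3 w / 4` and the second
at least `(3 / 2)² - 1 = 5 / 4`, so `h(β, ·) ≥ 15 w / 16` on all of `[w, 1]`. Since `β ≤ 1`, the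
square of the constant is at most `8 · 16 / (15 w) < 9 / w`.
-/

/-- The function `h` of the statement. For `0 ≤ z` it is the negated discriminant
`4 β - (1 + β - z)²` of the characteristic polynomial `x² - (1 + β - z) x + β` of the heavy-ball
iteration along an eigenvector, `z` being the step size times the eigenvalue. -/
def heavyBallNegDiscrim (β z : ℝ) : ℝ :=
  -((β - (1 - √z) ^ 2) * (β - (1 + √z) ^ 2))

theorem heavyBallNegDiscrim_one_sub_sq (u z : ℝ) :
    heavyBallNegDiscrim ((1 - u) ^ 2) z = (√z ^ 2 - u ^ 2) * ((2 - u) ^ 2 - √z ^ 2) := by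
  unfold heavyBallNegDiscrim
  ring

theorem le_heavyBallNegDiscrim {w z : ℝ} (hw : 0 ≤ w) (hwz : w ≤ z) (hz : z ≤ 1) :
    15 / 16 * w ≤ heavyBallNegDiscrim ((1 - √w / 2) ^ 2) z := by
  have sqrt_w_le_one : √w ≤ 1 := Real.sqrt_le_one.mpr (hwz.trans hz)
  have first_factor : 3 / 4 * w ≤ z - (√w / 2) ^ 2 := by
    rw [div_pow, Real.sq_sqrt hw]
    linarith
  have second_factor : 5 / 4 ≤ (2 - √w / 2) ^ 2 - z := by
    have : (3 / 2) ^ 2 ≤ (2 - √w / 2) ^ 2 := by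
      gcongr
      linarith
    linarith
  calc 15 / 16 * w = 3 / 4 * w * (5 / 4) := by ring
    _ ≤ (z - (√w / 2) ^ 2) * ((2 - √w / 2) ^ 2 - z) := by
      gcongr
      exact (by positivity : 0 ≤ 3 / 4 * w).trans first_factor
    _ = heavyBallNegDiscrim ((1 - √w / 2) ^ 2) z := by
      rw [heavyBallNegDiscrim_one_sub_sq, Real.sq_sqrt (hw.trans hwz)]

theorem sqrt_two_mul_add_one_div_sqrt_le {β w m : ℝ} (hβ : β ≤ 1) (hw : 0 < w)
    (hm : 15 / 16 * w ≤ m) : √2 * (β + 1) / √m ≤ 3 * √w⁻¹ := by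
  refine div_le_of_le_mul₀ (by positivity) (by positivity) ?_
  calc √2 * (β + 1) ≤ √2 * 2 := by
        gcongr
        linarith
    _ ≤ 3 * √(15 / 16) := by
      refine (sq_le_sq₀ (by positivity) (by positivity)).mp ?_
      rw [mul_pow, mul_pow, Real.sq_sqrt (by norm_num), Real.sq_sqrt (by norm_num)]
      norm_num
    _ ≤ 3 * √(w⁻¹ * m) := by
      gcongr
      rwa [inv_mul_eq_div, le_div_iff₀ hw]
    _ = 3 * √w⁻¹ * √m := by rw [Real.sqrt_mul (by positivity), mul_assoc]

/-- **Lemma**: bound on the heavy-ball contraction constant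
`C₀ = √2(β+1)/√(min{h(β, αμ), h(β, αL)}) ≤ 3 √(κ/a)` for `α = a/L`,
`β = (1 − √a/(2√κ))²`, so that `αμ = a/κ` and `αL = a`. -/
theorem heavy_ball_contraction_constant_bound
    (κ a : ℝ) (hκ : 1 ≤ κ) (ha0 : 0 < a) (ha1 : a ≤ 1)
    (β : ℝ) (hβ : β = (1 - Real.sqrt a / (2 * Real.sqrt κ)) ^ 2)
    (h : ℝ → ℝ → ℝ)
    (hh : ∀ b z, h b z = -((b - (1 - Real.sqrt z) ^ 2) * (b - (1 + Real.sqrt z) ^ 2))) :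
    Real.sqrt 2 * (β + 1) / Real.sqrt (min (h β (a / κ)) (h β a))
      ≤ 3 * Real.sqrt (κ / a) := by
  obtain rfl : h = heavyBallNegDiscrim := funext₂ hh
  have ratio_pos : 0 < a / κ := by positivity
  have ratio_le : a / κ ≤ a := div_le_self ha0.le hκ
  have momentum_eq : β = (1 - √(a / κ) / 2) ^ 2 := by
    rw [hβ, Real.sqrt_div ha0.le, div_div, mul_comm 2]
  have momentum_le_one : β ≤ 1 := by
    have : √(a / κ) ≤ 1 := Real.sqrt_le_one.mpr (ratio_le.trans ha1)
    rw [momentum_eq]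
    exact pow_le_one₀ (by linarith) (by linarith [Real.sqrt_nonneg (a / κ)])
  have le_min_negDiscrim :
      15 / 16 * (a / κ) ≤ min (heavyBallNegDiscrim β (a / κ)) (heavyBallNegDiscrim β a) := by
    rw [momentum_eq]
    exact le_min (le_heavyBallNegDiscrim ratio_pos.le le_rfl (ratio_le.trans ha1))
      (le_heavyBallNegDiscrim ratio_pos.le ratio_le ha1)
  rw [← inv_div a κ]
  exact sqrt_two_mul_add_one_div_sqrt_le momentum_le_one ratio_pos le_min_negDiscrim
end
end

section
/- (Intermediate claims in the contraction-constant bound.) Let κ ≥ 1, 0 < a ≤ 1, β = (1 − √a/(2√κ))², and h(β, z) := −(β − (1 − √z)²)(β − (1 + √z)²). Then h(β, a/κ) ≥ (15/16)·(a/κ) and h(β, a) ≥ (15/16)·a. -/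
noncomputable section

/-!
By Heron's formula, `h β z` is `16` times the squared area of a triangle with sides `1`, `√β`, `√z`,
so it can be refactored with the roles of `√β` and `√z` exchanged. For `√β = 1 - t / 2` with
`t = √(a / κ)` this gives `h β z = (z - t² / 4) * ((2 - t / 2)² - z)`, and for `t² ≤ z ≤ 1` the two
factors are at least `3 / 4 * z` and `5 / 4`. Both claims are instances, with `z = a / κ` and
`z = a`.
-/

lemma neg_sq_sub_sq_mul_sq_sub_sq_swap {R : Type*} [CommRing R] (c r s : R) :
    -((s ^ 2 - (c - r) ^ 2) * (s ^ 2 - (c + r) ^ 2)) =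
      (r ^ 2 - (c - s) ^ 2) * ((c + s) ^ 2 - r ^ 2) := by
  ring

section OrderedField

variable {K : Type*} [Field K] [LinearOrder K] [IsStrictOrderedRing K] {r t : K}

lemma three_quarters_mul_sq_le_sq_sub_sq_half (htr : |t| ≤ r) :
    3 / 4 * r ^ 2 ≤ r ^ 2 - (t / 2) ^ 2 := by
  have t_sq_le : t ^ 2 ≤ r ^ 2 := sq_le_sq.mpr (htr.trans (le_abs_self r))
  linarith [div_pow t 2 2]

lemma five_quarters_le_sq_two_sub_half_sub_sq (htr : |t| ≤ r) (hr : r ≤ 1) :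
    5 / 4 ≤ (2 - t / 2) ^ 2 - r ^ 2 := by
  have r_sq_le : r ^ 2 ≤ 1 := pow_le_one₀ ((abs_nonneg t).trans htr) hr
  have half_le : 3 / 2 ≤ 2 - t / 2 := by linarith [le_abs_self t]
  have sq_ge : (3 / 2) ^ 2 ≤ (2 - t / 2) ^ 2 := by gcongr
  linarith

lemma fifteen_sixteenths_mul_sq_le (htr : |t| ≤ r) (hr : r ≤ 1) :
    15 / 16 * r ^ 2 ≤
      -(((1 - t / 2) ^ 2 - (1 - r) ^ 2) * ((1 - t / 2) ^ 2 - (1 + r) ^ 2)) := by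
  have left_factor := three_quarters_mul_sq_le_sq_sub_sq_half htr
  have right_factor := five_quarters_le_sq_two_sub_half_sub_sq htr hr
  calc 15 / 16 * r ^ 2 = 3 / 4 * r ^ 2 * (5 / 4) := by ring
    _ ≤ (r ^ 2 - (t / 2) ^ 2) * ((2 - t / 2) ^ 2 - r ^ 2) :=
      mul_le_mul left_factor right_factor (by norm_num) (le_trans (by positivity) left_factor)
    _ = (r ^ 2 - (1 - (1 - t / 2)) ^ 2) * ((1 + (1 - t / 2)) ^ 2 - r ^ 2) := by ring
    _ = -(((1 - t / 2) ^ 2 - (1 - r) ^ 2) * ((1 - t / 2) ^ 2 - (1 + r) ^ 2)) :=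
      (neg_sq_sub_sq_mul_sq_sub_sq_swap 1 r (1 - t / 2)).symm

end OrderedField

lemma fifteen_sixteenths_mul_le_of_sqrt {x z : ℝ} (hz0 : 0 ≤ z) (hxz : x ≤ z) (hz1 : z ≤ 1) :
    15 / 16 * z ≤
      -(((1 - √x / 2) ^ 2 - (1 - √z) ^ 2) * ((1 - √x / 2) ^ 2 - (1 + √z) ^ 2)) := by
  have abs_sqrt_le : |√x| ≤ √z :=
    (abs_of_nonneg (Real.sqrt_nonneg x)).trans_le (Real.sqrt_le_sqrt hxz)
  simpa only [Real.sq_sqrt hz0] using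
    fifteen_sixteenths_mul_sq_le abs_sqrt_le (Real.sqrt_le_one.mpr hz1)

/-- **Lemma**: intermediate claims in the contraction-constant bound:
`h(β, a/κ) ≥ (15/16)(a/κ)` and `h(β, a) ≥ (15/16) a` for `β = (1 − √a/(2√κ))²`. -/
theorem heavy_ball_h_lower_bounds
    (κ a : ℝ) (hκ : 1 ≤ κ) (ha0 : 0 < a) (ha1 : a ≤ 1)
    (β : ℝ) (hβ : β = (1 - Real.sqrt a / (2 * Real.sqrt κ)) ^ 2)
    (h : ℝ → ℝ → ℝ)
    (hh : ∀ b z, h b z = -((b - (1 - Real.sqrt z) ^ 2) * (b - (1 + Real.sqrt z) ^ 2))) :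
    15 / 16 * (a / κ) ≤ h β (a / κ) ∧ 15 / 16 * a ≤ h β a := by
  have β_eq : β = (1 - √(a / κ) / 2) ^ 2 := by
    rw [hβ, Real.sqrt_div ha0.le, div_div, mul_comm (√κ)]
  have a_div_κ_nonneg : 0 ≤ a / κ := by positivity
  have a_div_κ_le : a / κ ≤ a := div_le_self ha0.le hκ
  rw [hh, hh, β_eq]
  exact ⟨fifteen_sixteenths_mul_le_of_sqrt a_div_κ_nonneg le_rfl (a_div_κ_le.trans ha1),
    fifteen_sixteenths_mul_le_of_sqrt ha0.le a_div_κ_le ha1⟩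
end
end

section
/- (Intermediate deterministic claim in the one-step SHB recurrence.) Let L ≥ μ > 0 and let (η_k)_{k≥0} be a non-increasing sequence with η_0 = η and 0 < η_k < 1/(2L) for all k. Define λ_k := ((1 − 2ηL)/(η_k μ))·(1 − (1 − η_k μ)^k). Then for every k ≥ 0, η_{k+1} λ_{k+1} ≤ η_k ( 1 − 2Lη_k + λ_k (1 − η_k μ) ); equivalently, 2Lη_k² − η_k λ_k (1 − η_k μ) − η_k + η_{k+1} λ_{k+1} ≤ 0. -/
noncomputable section

/-!
The product `η_k λ_k` equals `(1 - 2ηL) S_k(η_k)`, where `S_k(x) = x ∑_{i<k} (1 - xμ)^i` satisfies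
`S_{k+1}(x) = x + (1 - xμ) S_k(x)` and is monotone in `x` as long as `xμ ≤ 1`. Since
`η_{k+1} ≤ η_k`, this bounds `η_{k+1} λ_{k+1}` by `(1 - 2ηL) η_k + (1 - η_k μ) η_k λ_k`, and
`1 - 2ηL ≤ 1 - 2L η_k`.
-/

section DiscountedStep

variable {R : Type*} [CommRing R]

/-- The total contribution `x ∑_{i<k} (1 - xμ)^i` of `k` steps of size `x`, each discounted by the
contraction factor `1 - xμ` of every later step. The geometric sum is kept unevaluated so that
`μ = 0` is not a special case. -/
def discountedStep (μ : R) (k : ℕ) (x : R) : R :=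
  x * ∑ i ∈ Finset.range k, (1 - x * μ) ^ i

theorem discountedStep_succ (μ : R) (k : ℕ) (x : R) :
    discountedStep μ (k + 1) x = x + (1 - x * μ) * discountedStep μ k x := by
  rw [discountedStep, geom_sum_succ, discountedStep]
  ring

theorem mul_discountedStep (μ : R) (k : ℕ) (x : R) :
    μ * discountedStep μ k x = 1 - (1 - x * μ) ^ k := by
  rw [← mul_neg_geom_sum, discountedStep]
  ring

theorem monotoneOn_discountedStep [PartialOrder R] [IsOrderedRing R] (μ : R) (k : ℕ) :
    MonotoneOn (discountedStep μ k) {x | x * μ ≤ 1} := by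
  intro x hx y hy hxy
  induction k with
  | zero => simp [discountedStep]
  | succ k ih =>
    have h_factor : 0 ≤ 1 - y * μ := sub_nonneg.2 hy
    have h_slope : 0 ≤ 1 - μ * discountedStep μ k x := by
      rw [mul_discountedStep, sub_sub_cancel]
      exact pow_nonneg (sub_nonneg.2 hx) k
    calc discountedStep μ (k + 1) x
        = x * (1 - μ * discountedStep μ k x) + discountedStep μ k x := by
          rw [discountedStep_succ]; ring
      _ ≤ y * (1 - μ * discountedStep μ k x) + discountedStep μ k x := by gcongr
      _ = y + (1 - y * μ) * discountedStep μ k x := by ring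
      _ ≤ y + (1 - y * μ) * discountedStep μ k y := by gcongr
      _ = discountedStep μ (k + 1) y := (discountedStep_succ μ k y).symm

end DiscountedStep

theorem mul_div_mul_one_sub_pow_eq_mul_discountedStep {K : Type*} [Field K] {μ x : K}
    (hμ : μ ≠ 0) (hx : x ≠ 0) (c : K) (k : ℕ) :
    x * (c / (x * μ) * (1 - (1 - x * μ) ^ k)) = c * discountedStep μ k x := by
  rw [← mul_discountedStep]
  field_simp

theorem lambda_sequence_inequality_general {K : Type*} [Field K] [LinearOrder K]
    [IsStrictOrderedRing K] {L μ : K} (hL : 0 ≤ L) (hμ : μ ≠ 0) {η : ℕ → K} (hanti : Antitone η)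
    (hpos : ∀ k, 0 < η k) (hηL : 2 * η 0 * L ≤ 1) (hημ : ∀ k, η k * μ ≤ 1) {lam : ℕ → K}
    (hlam : ∀ k, lam k = (1 - 2 * η 0 * L) / (η k * μ) * (1 - (1 - η k * μ) ^ k)) (k : ℕ) :
    η (k + 1) * lam (k + 1) ≤ η k * (1 - 2 * L * η k + lam k * (1 - η k * μ)) := by
  set c := 1 - 2 * η 0 * L
  have hη_lam (j : ℕ) : η j * lam j = c * discountedStep μ j (η j) := by
    rw [hlam, mul_div_mul_one_sub_pow_eq_mul_discountedStep hμ (hpos j).ne']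
  have hc_le : c ≤ 1 - 2 * L * η k := by
    linarith [mul_le_mul_of_nonneg_left (hanti k.zero_le) hL]
  calc η (k + 1) * lam (k + 1)
      = c * discountedStep μ (k + 1) (η (k + 1)) := hη_lam (k + 1)
    _ ≤ c * discountedStep μ (k + 1) (η k) := by
        refine mul_le_mul_of_nonneg_left ?_ (sub_nonneg.2 hηL)
        exact monotoneOn_discountedStep μ (k + 1) (hημ (k + 1)) (hημ k) (hanti k.le_succ)
    _ = η k * c + η k * lam k * (1 - η k * μ) := by
        rw [discountedStep_succ, hη_lam]; ring
    _ ≤ η k * (1 - 2 * L * η k) + η k * lam k * (1 - η k * μ) := by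
        gcongr
        exact (hpos k).le
    _ = η k * (1 - 2 * L * η k + lam k * (1 - η k * μ)) := by ring

/-- **Lemma**: deterministic inequality for the momentum-averaging sequence `λ_k` of SHB:
`η_{k+1} λ_{k+1} ≤ η_k (1 − 2Lη_k + λ_k(1 − η_k μ))`. -/
theorem lambda_sequence_inequality
    (L μ : ℝ) (hμ : 0 < μ) (hμL : μ ≤ L)
    (η : ℕ → ℝ) (hanti : ∀ k, η (k + 1) ≤ η k)
    (hpos : ∀ k, 0 < η k) (hub : ∀ k, η k < 1 / (2 * L))
    (lam : ℕ → ℝ)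
    (hlam : ∀ k, lam k = (1 - 2 * η 0 * L) / (η k * μ) * (1 - (1 - η k * μ) ^ k)) :
    ∀ k : ℕ, η (k + 1) * lam (k + 1) ≤ η k * (1 - 2 * L * η k + lam k * (1 - η k * μ)) := by
  have hL : 0 < L := hμ.trans_le hμL
  have hηL (k : ℕ) : η k * (2 * L) < 1 := (lt_div_iff₀ (by positivity)).1 (hub k)
  have hημ (k : ℕ) : η k * μ ≤ 1 :=
    (mul_le_mul_of_nonneg_left (by linarith) (hpos k).le).trans (hηL k).le
  exact lambda_sequence_inequality_general hL.le hμ.ne' (antitone_nat_of_succ_le hanti) hpos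
    (by linarith [hηL 0]) hημ hlam
end
end
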